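/- arXiv:2209.04058 — 2 statements merged into one kernel-verified Lean document; each statement's English description precedes it below -/
import Mathlib

section
/- Consider the mechanism ScaledGreedy with parameter γ > 0, and let r and the sets J_i denote the scalars and sets when ScaledGreedy terminates. For any machine i, if there exists a job j with r(i,j) > 1, then Σ_{j' ∈ J_i} p̂(i,j') ≥ γ·MS(p̂, x̂). -/
open scoped Classical
noncomputable section
variable {n m : ℕ}

/-- The makespan of allocation `a` under instance `p`. -/
def MS [NeZero n] (p : Fin n → Fin m → ℝ) (a : Fin m → Fin n) : ℝ :=
  Finset.univ.sup' Finset.univ_nonempty fun i => ∑ j, if a j = i then p i j else 0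

/-- The optimal makespan of instance `p`. -/
def OPT [NeZero n] (p : Fin n → Fin m → ℝ) : ℝ :=
  Finset.univ.inf' Finset.univ_nonempty fun a : Fin m → Fin n => MS p a

lemma exists_argmin [NeZero n] (v : Fin n → ℝ) :
    (Finset.univ.filter fun i => ∀ i', v i ≤ v i').Nonempty := by
  obtain ⟨i, -, hi⟩ := Finset.exists_min_image Finset.univ v Finset.univ_nonempty
  exact ⟨i, by
    simp only [Finset.mem_filter, Finset.mem_univ, true_and]
    exact fun i' => hi i' (Finset.mem_univ i')⟩

/-- The state of the iterative loop of `ScaledGreedy`: the sets `J_i` and the scalars `r(i,j)`. -/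
structure SGState (n m : ℕ) where
  J : Fin n → Finset (Fin m)
  r : Fin n → Fin m → ℝ

/-- The set `∪_i J_i` of jobs already put aside by the loop. -/
def sgAssigned (s : SGState n m) : Finset (Fin m) :=
  Finset.univ.filter fun j => ∃ i, j ∈ s.J i

/-- The set `I` of machines whose set `J_i` is not yet full. -/
def sgI [NeZero n] (phat : Fin n → Fin m → ℝ) (xhat : Fin m → Fin n) (γ : ℝ)
    (s : SGState n m) : Finset (Fin n) :=
  Finset.univ.filter fun i => ∑ j ∈ s.J i, phat i j < γ * MS phat xhat

/-- The set `T` of candidate pairs `(i,j)`. -/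
def sgT [NeZero n] (phat : Fin n → Fin m → ℝ) (xhat : Fin m → Fin n) (γ : ℝ)
    (s : SGState n m) : Finset (Fin n × Fin m) :=
  Finset.univ.filter fun q =>
    q.2 ∉ sgAssigned s ∧ q.1 ∈ sgI phat xhat γ s ∧
    phat q.1 q.2 < phat (xhat q.2) q.2 ∧
    ∀ i' ∈ sgI phat xhat γ s, phat i' q.2 < phat (xhat q.2) q.2 → phat q.1 q.2 ≤ phat i' q.2

/-- The initial state of `ScaledGreedy`: `J_i = ∅` and `r(i,j) = max(p̂(î_j,j)/p̂(i,j), 1)`. -/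
def sgInit (phat : Fin n → Fin m → ℝ) (xhat : Fin m → Fin n) : SGState n m :=
  ⟨fun _ => ∅, fun i j => max (phat (xhat j) j / phat i j) 1⟩

/-- One iteration of the while-loop of `ScaledGreedy`: a pair `(i*,j*) ∈ T` maximizing
`p̂(î_j,j)/p̂(i,j)` is selected, `j*` is added to `J_{i*}`, and `r(i,j*)` is set to `1` for
every machine `i` with `p̂(i*,j*) ≤ p̂(i,j*)`. -/
def SGStep [NeZero n] (phat : Fin n → Fin m → ℝ) (xhat : Fin m → Fin n) (γ : ℝ)
    (s s' : SGState n m) : Prop :=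
  ∃ q ∈ sgT phat xhat γ s,
    (∀ q' ∈ sgT phat xhat γ s,
      phat (xhat q'.2) q'.2 / phat q'.1 q'.2 ≤ phat (xhat q.2) q.2 / phat q.1 q.2) ∧
    s'.J = (fun i => if i = q.1 then insert q.2 (s.J i) else s.J i) ∧
    s'.r = fun i j => if j = q.2 ∧ phat q.1 q.2 ≤ phat i q.2 then 1 else s.r i j

/-- `s` is the state of `ScaledGreedy` at termination: it is reachable from the initial state
by iterations of the loop, and `T = ∅` so the loop has terminated. -/
def SGFinal [NeZero n] (phat : Fin n → Fin m → ℝ) (xhat : Fin m → Fin n) (γ : ℝ)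
    (s : SGState n m) : Prop :=
  Relation.ReflTransGen (SGStep phat xhat γ) (sgInit phat xhat) s ∧ sgT phat xhat γ s = ∅

/-- The allocation computed by `ScaledGreedy` from the terminal state `s`: each job `j` goes to
a machine minimizing `r(i,j)·p(i,j)`, with ties broken in favor of `î_j` first, then the machine
`i'` with `j ∈ J_{i'}` (if any), then the smallest-index machine. -/
def sgAssign [NeZero n] (s : SGState n m) (xhat : Fin m → Fin n)
    (p : Fin n → Fin m → ℝ) (j : Fin m) : Fin n :=
  let v : Fin n → ℝ := fun i => s.r i j * p i j
  if ∀ i, v (xhat j) ≤ v i then xhat j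
  else if h : ∃ i', j ∈ s.J i' ∧ ∀ i, v i' ≤ v i then Classical.choose h
  else (Finset.univ.filter fun i => ∀ i', v i ≤ v i').min' (exists_argmin v)

/-- `max_j r(i,j)`, the largest scalar of machine `i`. -/
def maxScalar [NeZero m] (r : Fin n → Fin m → ℝ) (i : Fin n) : ℝ :=
  Finset.univ.sup' Finset.univ_nonempty fun j => r i j
theorem sg_inv [NeZero n]
    (phat : Fin n → Fin m → ℝ) (xhat : Fin m → Fin n) (γ : ℝ) (s : SGState n m)
    (hphat : ∀ i j, 0 < phat i j)
    (hs : Relation.ReflTransGen (SGStep phat xhat γ) (sgInit phat xhat) s) :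
    ∀ i j, 1 < s.r i j → phat i j < phat (xhat j) j ∧
      ((∃ i', j ∈ s.J i') → γ * MS phat xhat ≤ ∑ j' ∈ s.J i, phat i j') := by
  induction hs with
  | refl =>
    intro i j h
    simp only [sgInit, lt_max_iff, lt_irrefl, or_false] at h
    rw [one_lt_div (hphat i j)] at h
    exact ⟨h, by simp [sgInit]⟩
  | @tail s s' _ hstep ih =>
    obtain ⟨q, hq, -, hJ, hr⟩ := hstep
    intro i j h
    rw [hr] at h
    simp only at h
    split_ifs at h with hc
    · exact absurd h (lt_irrefl _)
    obtain ⟨h1, h2⟩ := ih i j h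
    refine ⟨h1, fun hj => ?_⟩
    have hmono : ∑ j' ∈ s.J i, phat i j' ≤ ∑ j' ∈ s'.J i, phat i j' := by
      apply Finset.sum_le_sum_of_subset_of_nonneg
      · rw [hJ]
        simp only
        split_ifs
        · exact Finset.subset_insert _ _
        · exact subset_rfl
      · intro k _ _
        exact (hphat i k).le
    refine le_trans ?_ hmono
    by_cases hjq : j = q.2
    · by_contra hlt
      push Not at hlt
      simp only [sgT, Finset.mem_filter, Finset.mem_univ, true_and] at hq
      subst hjq
      exact hc ⟨rfl, hq.2.2.2 i (by simpa [sgI] using hlt) h1⟩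
    · apply h2
      obtain ⟨i', hi'⟩ := hj
      refine ⟨i', ?_⟩
      rw [hJ] at hi'
      simp only at hi'
      split_ifs at hi'
      · exact (Finset.mem_insert.1 hi').resolve_left hjq
      · exact hi'

/-- At termination of `ScaledGreedy`, for any machine `i`, if some job `j`
has `r(i,j) > 1`, then `Σ_{j' ∈ J_i} p̂(i,j') ≥ γ·MS(p̂,x̂)`. -/
theorem sg_Ji_full [NeZero n]
    (phat : Fin n → Fin m → ℝ) (xhat : Fin m → Fin n) (γ : ℝ) (s : SGState n m)
    (hphat : ∀ i j, 0 < phat i j) (hγ : 0 < γ)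
    (hfinal : SGFinal phat xhat γ s) (i : Fin n) (h : ∃ j, 1 < s.r i j) :
    γ * MS phat xhat ≤ ∑ j' ∈ s.J i, phat i j' := by
  obtain ⟨hreach, hT⟩ := hfinal
  obtain ⟨j, hj⟩ := h
  obtain ⟨h1, h2⟩ := sg_inv phat xhat γ s hphat hreach i j hj
  by_cases ha : ∃ i', j ∈ s.J i'
  · exact h2 ha
  by_contra hlt
  push Not at hlt
  have hi : i ∈ sgI phat xhat γ s := by simpa [sgI] using hlt
  obtain ⟨k, hk, hmin⟩ := Finset.exists_min_image
    ((sgI phat xhat γ s).filter fun i' => phat i' j < phat (xhat j) j) (fun i' => phat i' j)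
    ⟨i, Finset.mem_filter.2 ⟨hi, h1⟩⟩
  rw [Finset.mem_filter] at hk
  have : (k, j) ∈ sgT phat xhat γ s := by
    simp only [sgT, Finset.mem_filter, Finset.mem_univ, true_and]
    refine ⟨by simpa [sgAssigned] using ha, hk.1, hk.2, fun i' hi' hl => ?_⟩
    exact hmin i' (Finset.mem_filter.2 ⟨hi', hl⟩)
  rw [hT] at this
  exact absurd this (Finset.notMem_empty _)
end
end

section
/- Let r(i,j) ≥ 1 be scalars for each machine i and job j such that Σ_{i : max_j r(i,j) > 1} (max_j r(i,j)) ≤ n/γ for some γ > 0, and let x be any allocation that assigns each job j to a machine i_j minimizing r(i,j)·p(i,j) over all machines i. Then MS(p, x) ≤ (1 + 1/γ)·n·OPT(p). Since the scalars of ScaledGreedy at termination satisfy these conditions, ScaledGreedy with parameter γ > 0 is (1 + 1/γ)n-robust: for every instance p and prediction p̂, its output allocation x satisfies MS(p, x) ≤ (1 + 1/γ)·n·OPT(p). -/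
open scoped Classical
noncomputable section
variable {n m : ℕ}

lemma sg_load_le [NeZero n] (p : Fin n → Fin m → ℝ) (a : Fin m → Fin n) (i : Fin n) :
    (∑ j, if a j = i then p i j else 0) ≤ MS p a :=
  Finset.le_sup' (fun i => ∑ j, if a j = i then p i j else 0) (Finset.mem_univ i)

lemma sg_part1 [NeZero n] [NeZero m] (γ : ℝ)
    (p : Fin n → Fin m → ℝ) (hp : ∀ i j, 0 < p i j)
    (r : Fin n → Fin m → ℝ) (hr : ∀ i j, 1 ≤ r i j)
    (hs : ∑ i ∈ Finset.univ.filter (fun i => 1 < maxScalar r i), maxScalar r i ≤ (n : ℝ) / γ)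
    (x : Fin m → Fin n) (hx : ∀ j i, r (x j) j * p (x j) j ≤ r i j * p i j) :
    MS p x ≤ (1 + 1 / γ) * n * OPT p := by
  have hR : ∀ i j, r i j ≤ maxScalar r i := fun i j =>
    Finset.le_sup' (fun j => r i j) (Finset.mem_univ j)
  have hR0 : ∀ i, 0 ≤ maxScalar r i := fun i => by
    have h1 := hR i 0
    have h2 := hr i 0
    linarith
  obtain ⟨o, -, ho⟩ := Finset.exists_mem_eq_inf' (Finset.univ_nonempty)
    (fun a : Fin m → Fin n => MS p a)
  have ho' : OPT p = MS p o := ho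
  have hO : 0 ≤ MS p o := le_trans (Finset.sum_nonneg (fun j _ => by
    split_ifs
    · exact (hp _ _).le
    · exact le_rfl)) (sg_load_le p o 0)
  rw [ho']
  have hsum : ∑ i, maxScalar r i ≤ (1 + 1 / γ) * n := by
    rw [← Finset.sum_filter_add_sum_filter_not Finset.univ (fun i => 1 < maxScalar r i)]
    have h2 : ∑ i ∈ Finset.univ.filter (fun i => ¬ 1 < maxScalar r i), maxScalar r i ≤ n := by
      calc _ ≤ ∑ i ∈ Finset.univ.filter (fun i => ¬ 1 < maxScalar r i), (1:ℝ) :=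
            Finset.sum_le_sum (fun i hi => not_lt.1 (Finset.mem_filter.1 hi).2)
        _ ≤ ∑ i : Fin n, (1:ℝ) := Finset.sum_le_sum_of_subset_of_nonneg
            (Finset.filter_subset _ _) (fun _ _ _ => zero_le_one)
        _ = n := by simp
    have : (1 + 1 / γ) * n = n / γ + n := by ring
    linarith
  refine Finset.sup'_le _ _ fun i _ => ?_
  calc (∑ j, if x j = i then p i j else 0) ≤ ∑ j, maxScalar r (o j) * p (o j) j := by
        refine Finset.sum_le_sum fun j _ => ?_
        have h0 : 0 ≤ maxScalar r (o j) * p (o j) j := mul_nonneg (hR0 _) (hp _ _).le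
        split_ifs with h
        · subst h
          calc p (x j) j ≤ r (x j) j * p (x j) j := le_mul_of_one_le_left (hp _ _).le (hr _ _)
            _ ≤ r (o j) j * p (o j) j := hx j (o j)
            _ ≤ _ := mul_le_mul_of_nonneg_right (hR _ _) (hp _ _).le
        · exact h0
    _ = ∑ k, maxScalar r k * ∑ j, if o j = k then p k j else 0 := by
        simp_rw [Finset.mul_sum]
        rw [Finset.sum_comm]
        refine Finset.sum_congr rfl fun j _ => ?_
        simp
    _ ≤ ∑ k, maxScalar r k * MS p o := Finset.sum_le_sum fun k _ =>
        mul_le_mul_of_nonneg_left (sg_load_le p o k) (hR0 k)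
    _ = (∑ k, maxScalar r k) * MS p o := by rw [Finset.sum_mul]
    _ ≤ _ := mul_le_mul_of_nonneg_right hsum hO

lemma sg_exists_T [NeZero n] (phat : Fin n → Fin m → ℝ) (xhat : Fin m → Fin n) (γ : ℝ)
    (s : SGState n m) (i : Fin n) (j : Fin m) (hj : j ∉ sgAssigned s)
    (hi : i ∈ sgI phat xhat γ s) (h : phat i j < phat (xhat j) j) :
    ∃ k, (k, j) ∈ sgT phat xhat γ s ∧ phat k j ≤ phat i j := by
  obtain ⟨k, hk, hmin⟩ := Finset.exists_min_image (sgI phat xhat γ s) (fun k => phat k j) ⟨i, hi⟩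
  refine ⟨k, ?_, hmin i hi⟩
  simp only [sgT, Finset.mem_filter, Finset.mem_univ, true_and]
  exact ⟨hj, hk, lt_of_le_of_lt (hmin i hi) h, fun i' hi' _ => hmin i' hi'⟩

structure SGInv [NeZero n] (phat : Fin n → Fin m → ℝ) (xhat : Fin m → Fin n) (γ : ℝ)
    (s : SGState n m) : Prop where
  disj : ∀ i i' j, j ∈ s.J i → j ∈ s.J i' → i = i'
  one : ∀ i j, 1 ≤ s.r i j
  val : ∀ i j, 1 < s.r i j → s.r i j = phat (xhat j) j / phat i j
  full : ∀ i j, 1 < s.r i j → j ∈ sgAssigned s → i ∉ sgI phat xhat γ s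
  ratio : ∀ i j' j, 1 < s.r i j' → j ∈ s.J i →
    phat (xhat j') j' / phat i j' ≤ phat (xhat j) j / phat i j

lemma sg_inv_s13 [NeZero n] (phat : Fin n → Fin m → ℝ) (hp : ∀ i j, 0 < phat i j)
    (xhat : Fin m → Fin n) (γ : ℝ) (s : SGState n m)
    (h : Relation.ReflTransGen (SGStep phat xhat γ) (sgInit phat xhat) s) :
    SGInv phat xhat γ s := by
  induction h with
  | refl =>
    refine ⟨?_, ?_, ?_, ?_, ?_⟩
    · intro i i' j h; simp [sgInit] at h
    · intro i j; simp [sgInit]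
    · intro i j h
      simp only [sgInit, lt_max_iff, lt_irrefl, or_false] at h ⊢
      exact max_eq_left h.le
    · intro i j _ h; simp [sgInit, sgAssigned] at h
    · intro i j' j _ h; simp [sgInit] at h
  | @tail s s' _ hstep ih =>
    obtain ⟨⟨a, b⟩, hq, hmax, hJ, hr⟩ := hstep
    have hqT := hq
    simp only [sgT, Finset.mem_filter, Finset.mem_univ, true_and] at hq
    obtain ⟨hb, ha, hab, hamin⟩ := hq
    have hb' : ∀ i, b ∉ s.J i := fun i hi => hb (by simp [sgAssigned]; exact ⟨i, hi⟩)
    have hJm : ∀ i j, j ∈ s'.J i ↔ (i = a ∧ j = b) ∨ j ∈ s.J i := by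
      intro i j
      rw [hJ]
      by_cases h : i = a <;> simp [h]
    have hrr : ∀ i j, 1 < s'.r i j → s'.r i j = s.r i j ∧ ¬ (j = b ∧ phat a b ≤ phat i b) := by
      intro i j h
      rw [hr] at h ⊢
      dsimp only at h ⊢
      split_ifs at h ⊢ with h1
      · exact absurd h (lt_irrefl _)
      · exact ⟨rfl, h1⟩
    have hI : ∀ i, i ∉ sgI phat xhat γ s → i ∉ sgI phat xhat γ s' := by
      intro i hi hi'
      apply hi
      simp only [sgI, Finset.mem_filter, Finset.mem_univ, true_and] at hi' ⊢
      refine lt_of_le_of_lt ?_ hi'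
      exact Finset.sum_le_sum_of_subset_of_nonneg
        (fun j hj => (hJm i j).2 (Or.inr hj)) (fun j _ _ => (hp i j).le)
    have hlt : ∀ i j, 1 < s.r i j → phat i j < phat (xhat j) j := by
      intro i j h
      rw [ih.val i j h, one_lt_div (hp i j)] at h
      exact h
    refine ⟨?_, ?_, ?_, ?_, ?_⟩
    · intro i i' j h h'
      rw [hJm] at h h'
      rcases h with ⟨h1, h2⟩ | h <;> rcases h' with ⟨h1', h2'⟩ | h'
      · rw [h1, h1']
      · subst h2; exact absurd h' (hb' _)
      · subst h2'; exact absurd h (hb' _)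
      · exact ih.disj _ _ _ h h'
    · intro i j
      rw [hr]
      dsimp only
      split_ifs
      · exact le_rfl
      · exact ih.one i j
    · intro i j h
      have h1 := (hrr i j h).1
      rw [h1] at h ⊢
      exact ih.val i j h
    · intro i j h hj
      obtain ⟨h1, h2⟩ := hrr i j h
      rw [h1] at h
      apply hI
      by_cases hjs : j ∈ sgAssigned s
      · exact ih.full i j h hjs
      · simp only [sgAssigned, Finset.mem_filter, Finset.mem_univ, true_and] at hj hjs
        obtain ⟨k, hk⟩ := hj
        rw [hJm] at hk
        rcases hk with ⟨_, hk⟩ | hk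
        · subst hk
          intro hi
          exact h2 ⟨rfl, hamin i hi (hlt i j h)⟩
        · exact absurd ⟨k, hk⟩ hjs
    · intro i j' j h hj
      obtain ⟨h1, h2⟩ := hrr i j' h
      rw [h1] at h
      rw [hJm] at hj
      rcases hj with ⟨hia, hjb⟩ | hj
      · subst hia hjb
        have hj' : j' ∉ sgAssigned s := fun hj' => ih.full i j' h hj' ha
        obtain ⟨k, hk, hle⟩ := sg_exists_T phat xhat γ s i j' hj' ha (hlt i j' h)
        refine le_trans ?_ (hmax _ hk)
        exact div_le_div_of_nonneg_left (hp _ _).le (hp _ _) hle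
      · exact ih.ratio i j' j h hj

lemma sg_final_sum [NeZero n] [NeZero m] (phat : Fin n → Fin m → ℝ) (hp : ∀ i j, 0 < phat i j)
    (xhat : Fin m → Fin n) (γ : ℝ) (hγ : 0 < γ) (s : SGState n m)
    (h : SGFinal phat xhat γ s) :
    ∑ i ∈ Finset.univ.filter (fun i => 1 < maxScalar s.r i), maxScalar s.r i ≤ (n : ℝ) / γ := by
  obtain ⟨hreach, hT⟩ := h
  have inv := sg_inv_s13 phat hp xhat γ s hreach
  have hM : 0 < MS phat xhat := by
    refine lt_of_lt_of_le ?_ (sg_load_le phat xhat (xhat 0))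
    refine Finset.sum_pos' (fun j _ => ?_) ⟨0, Finset.mem_univ _, by simp [hp]⟩
    split_ifs
    · exact (hp _ _).le
    · exact le_rfl
  have hfull : ∀ i j, 1 < s.r i j → i ∉ sgI phat xhat γ s := by
    intro i j hij hi
    by_cases hj : j ∈ sgAssigned s
    · exact inv.full i j hij hj hi
    · have hlt := hij
      rw [inv.val i j hij, one_lt_div (hp i j)] at hlt
      obtain ⟨k, hk, _⟩ := sg_exists_T phat xhat γ s i j hj hi hlt
      rw [hT] at hk
      simp at hk
  have hkey : ∀ i ∈ Finset.univ.filter (fun i => 1 < maxScalar s.r i),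
      maxScalar s.r i * (γ * MS phat xhat) ≤ ∑ j ∈ s.J i, phat (xhat j) j := by
    intro i hi
    have hi1 := (Finset.mem_filter.1 hi).2
    obtain ⟨j', -, hj'⟩ := Finset.exists_mem_eq_sup' (Finset.univ_nonempty) (fun j => s.r i j)
    have hj'' : maxScalar s.r i = s.r i j' := hj'
    rw [hj''] at hi1 ⊢
    have hf := hfull i j' hi1
    simp only [sgI, Finset.mem_filter, Finset.mem_univ, true_and, not_lt] at hf
    calc s.r i j' * (γ * MS phat xhat) ≤ s.r i j' * ∑ j ∈ s.J i, phat i j :=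
          mul_le_mul_of_nonneg_left hf (by linarith)
      _ = ∑ j ∈ s.J i, s.r i j' * phat i j := Finset.mul_sum _ _ _
      _ ≤ _ := Finset.sum_le_sum fun j hj => by
          have := inv.ratio i j' j hi1 hj
          rw [← inv.val i j' hi1, le_div_iff₀ (hp i j)] at this
          exact this
  rw [le_div_iff₀ hγ]
  refine le_of_mul_le_mul_right ?_ hM
  rw [mul_assoc, Finset.sum_mul]
  calc _ ≤ ∑ i ∈ Finset.univ.filter (fun i => 1 < maxScalar s.r i),
        ∑ j ∈ s.J i, phat (xhat j) j := Finset.sum_le_sum hkey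
    _ ≤ ∑ i, ∑ j ∈ s.J i, phat (xhat j) j := Finset.sum_le_sum_of_subset_of_nonneg
        (Finset.filter_subset _ _) (fun _ _ _ => Finset.sum_nonneg fun _ _ => (hp _ _).le)
    _ = ∑ j ∈ Finset.univ.biUnion s.J, phat (xhat j) j := by
        rw [Finset.sum_biUnion]
        intro i _ i' _ hne
        rw [Function.onFun, Finset.disjoint_left]
        exact fun j hj hj' => hne (inv.disj i i' j hj hj')
    _ ≤ ∑ j, phat (xhat j) j := Finset.sum_le_sum_of_subset_of_nonneg
        (Finset.subset_univ _) (fun _ _ _ => (hp _ _).le)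
    _ = ∑ i, ∑ j, (if xhat j = i then phat i j else 0) := by
        rw [Finset.sum_comm]
        refine Finset.sum_congr rfl fun j _ => ?_
        simp
    _ ≤ ∑ i : Fin n, MS phat xhat := Finset.sum_le_sum fun i _ => sg_load_le phat xhat i
    _ = n * MS phat xhat := by simp

lemma sg_assign_min [NeZero n] (s : SGState n m) (xhat : Fin m → Fin n)
    (p : Fin n → Fin m → ℝ) (j : Fin m) (i : Fin n) :
    s.r (sgAssign s xhat p j) j * p (sgAssign s xhat p j) j ≤ s.r i j * p i j := by
  unfold sgAssign
  dsimp only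
  split_ifs with h1 h2
  · exact h1 i
  · exact (Classical.choose_spec h2).2 i
  · have := Finset.min'_mem _ (exists_argmin (fun i => s.r i j * p i j))
    exact (Finset.mem_filter.1 this).2 i

/-- If scalars `r(i,j) ≥ 1` satisfy `Σ_{i : max_j r(i,j) > 1} max_j r(i,j)
≤ n/γ`, then any allocation assigning each job to a machine minimizing `r(i,j)·p(i,j)` has
makespan at most `(1 + 1/γ)·n·OPT(p)`. In particular, since the scalars of `ScaledGreedy` at
termination satisfy these conditions, `ScaledGreedy` is `(1+1/γ)n`-robust. -/
theorem sg_robustness [NeZero n] [NeZero m] (γ : ℝ) (hγ : 0 < γ) :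
    (∀ p : Fin n → Fin m → ℝ, (∀ i j, 0 < p i j) →
      ∀ r : Fin n → Fin m → ℝ, (∀ i j, 1 ≤ r i j) →
      (∑ i ∈ Finset.univ.filter (fun i => 1 < maxScalar r i), maxScalar r i ≤ (n : ℝ) / γ) →
      ∀ x : Fin m → Fin n, (∀ j i, r (x j) j * p (x j) j ≤ r i j * p i j) →
      MS p x ≤ (1 + 1 / γ) * n * OPT p)
    ∧
    (∀ (p phat : Fin n → Fin m → ℝ) (xhat : Fin m → Fin n) (s : SGState n m),
      (∀ i j, 0 < p i j) → (∀ i j, 0 < phat i j) → SGFinal phat xhat γ s →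
      MS p (sgAssign s xhat p) ≤ (1 + 1 / γ) * n * OPT p) := by
  refine ⟨fun p hp r hr hs x hx => sg_part1 γ p hp r hr hs x hx, ?_⟩
  intro p phat xhat s hp hph hs
  exact sg_part1 γ p hp s.r (sg_inv_s13 phat hph xhat γ s hs.1).one
    (sg_final_sum phat hph xhat γ hγ s hs) _ (sg_assign_min s xhat p)
end
end
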